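/- arXiv:cs/0609076 — 2 statements merged into one kernel-verified Lean document; each statement's English description precedes it below -/
import Mathlib

section
/- Let n ≥ 1 and let c₁ ≥ c₂ ≥ ⋯ ≥ c_j ≥ 1 be integers with c₁ + c₂ + ⋯ + c_j = n. The number of noncrossing partitions of an n-element totally ordered set into j classes whose multiset of class sizes is {c₁,…,c_j} equals n(n-1)⋯(n-j+2) / f(c₁,…,c_j), where f(c₁,…,c_j) = ∏_{k≥1} n_k! and n_k is the number of indices r with c_r = k. -/
/-- A partition of the totally ordered set `Fin n` is noncrossing if there are no
`p₁ < q₁ < p₂ < q₂` with `p₁, p₂` in one class and `q₁, q₂` in a different class. -/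
def IsNoncrossing {n : ℕ} (P : Finpartition (Finset.univ : Finset (Fin n))) : Prop :=
  ¬ ∃ p₁ q₁ p₂ q₂ : Fin n, p₁ < q₁ ∧ q₁ < p₂ ∧ p₂ < q₂ ∧
      ∃ B ∈ P.parts, ∃ C ∈ P.parts, B ≠ C ∧ p₁ ∈ B ∧ p₂ ∈ B ∧ q₁ ∈ C ∧ q₂ ∈ C

/-- `f(c₁,…,c_j) = ∏_{k ≥ 1} n_k!` where `n_k` is the multiplicity of `k` in the
multiset of class sizes. -/
def fMult (m : Multiset ℕ) : ℕ := m.toFinset.prod fun k => (m.count k).factorial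

/-- The multiset of class sizes of a partition. -/
def partSizes {n : ℕ} (P : Finpartition (Finset.univ : Finset (Fin n))) : Multiset ℕ :=
  P.parts.val.map Finset.card

/-- A word is *extendable* with respect to the multiplicity bound `c` if no letter occurs too often,
no two letters cross, and every letter enclosed by two occurrences of another one is exhausted. -/
structure IsExtendable {α : Type*} [DecidableEq α] (c : α → ℕ) (l : List α) : Prop where
  count_le : ∀ a, l.count a ≤ c a
  not_crossing : ∀ a b, a ≠ b → ¬ [a, b, a, b].Sublist l
  count_eq : ∀ a b, a ≠ b → [a, b, a].Sublist l → l.count b = c b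

namespace IsExtendable

variable {α : Type*} [DecidableEq α] {c : α → ℕ} {l : List α} {x y : α}

theorem nil (c : α → ℕ) : IsExtendable c [] where
  count_le := by simp
  not_crossing := by simp
  count_eq := by simp

theorem of_cons (h : IsExtendable c (x :: l)) : IsExtendable c l where
  count_le a := (List.count_le_count_cons).trans (h.count_le a)
  not_crossing a b hab hs := h.not_crossing a b hab (hs.cons x)
  count_eq a b hab hs := by
    have hb := h.count_eq a b hab (hs.cons x)
    rcases eq_or_ne x b with rfl | hx
    · exact absurd (hs.cons_cons x) (h.not_crossing x a hab.symm)
    · rwa [List.count_cons_of_ne hx] at hb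

theorem of_suffix {l' : List α} (h : IsExtendable c l) (hs : l' <:+ l) : IsExtendable c l' := by
  obtain ⟨t, rfl⟩ := hs
  induction t with
  | nil => exact h
  | cons a t ih => exact ih h.of_cons

theorem count_lt_of_cons (h : IsExtendable c (x :: l)) : l.count x < c x := by
  have := h.count_le x
  rw [List.count_cons_self] at this
  omega

theorem cons_of_notMem (h : IsExtendable c l) (hx : x ∉ l) (hc : 0 < c x) :
    IsExtendable c (x :: l) where
  count_le a := by
    rcases eq_or_ne x a with rfl | hne
    · rw [List.count_cons_self, List.count_eq_zero_of_not_mem hx]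
      exact hc
    · rw [List.count_cons_of_ne hne]
      exact h.count_le a
  not_crossing a b hab hs := by
    rcases List.cons_sublist_cons'.1 hs with hs | ⟨rfl, hs'⟩
    · exact h.not_crossing a b hab hs
    · exact hx (hs'.subset (by simp))
  count_eq a b hab hs := by
    rcases List.cons_sublist_cons'.1 hs with hs | ⟨rfl, hs'⟩
    · rw [List.count_cons_of_ne, h.count_eq a b hab hs]
      rintro rfl
      exact hx (hs.subset (by simp))
    · exact absurd (hs'.subset (by simp)) hx

/-- If `y` is the most recent letter of the word that is not exhausted, it may be used again. -/
theorem cons_of_append {u v : List α} (h : IsExtendable c (u ++ y :: v))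
    (hu : ∀ z ∈ u, (u ++ y :: v).count z = c z) (hy : (u ++ y :: v).count y < c y) :
    IsExtendable c (y :: (u ++ y :: v)) where
  count_le a := by
    rcases eq_or_ne y a with rfl | hne
    · rw [List.count_cons_self]
      exact hy
    · rw [List.count_cons_of_ne hne]
      exact h.count_le a
  not_crossing a b hab hs := by
    rcases List.cons_sublist_cons'.1 hs with hs | ⟨rfl, hs⟩
    · exact h.not_crossing a b hab hs
    · exact hy.ne (h.count_eq b a hab.symm hs)
  count_eq a b hab hs := by
    rcases List.cons_sublist_cons'.1 hs with hs | ⟨rfl, hs⟩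
    · have hb := h.count_eq a b hab hs
      rw [List.count_cons_of_ne, hb]
      rintro rfl
      exact hy.ne hb
    · rw [List.count_cons_of_ne hab]
      by_contra hb
      have hbu : b ∉ u := fun hbu => hb (hu b hbu)
      have hbv : [b, a].Sublist (a :: v) := by
        obtain ⟨l₁, l₂, hl, h₁, h₂⟩ := List.sublist_append_iff.1 hs
        rcases l₁ with _ | ⟨z, l₁⟩
        · rw [List.nil_append] at hl
          rwa [hl]
        · obtain ⟨rfl, -⟩ := List.cons.inj hl
          exact absurd (h₁.subset (by simp)) hbu
      rcases List.cons_sublist_cons'.1 hbv with hbv | ⟨rfl, -⟩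
      · exact hb (h.count_eq a b hab ((hbv.cons_cons a).trans (List.sublist_append_right u _)))
      · exact hab rfl

theorem eq_of_append {u v : List α} (h : IsExtendable c (x :: (u ++ y :: v)))
    (hx : x ∈ u ++ y :: v) (hu : ∀ z ∈ u, (u ++ y :: v).count z = c z)
    (hy : (u ++ y :: v).count y < c y) : x = y := by
  by_contra hne
  have hxu : x ∉ u := fun hxu => h.count_lt_of_cons.ne (hu x hxu)
  have hxv : x ∈ v := by simpa [hxu, hne] using hx
  have hs : [x, y, x].Sublist (x :: (u ++ y :: v)) :=
    (((List.singleton_sublist.2 hxv).cons_cons y).trans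
      (List.sublist_append_right u _)).cons_cons x
  have := h.count_eq x y hne hs
  rw [List.count_cons_of_ne hne] at this
  omega

/-- As long as some letter of the word is not exhausted, exactly one letter of the word may be
used again. -/
theorem existsUnique_cons (h : IsExtendable c l) (hp : ∃ a ∈ l, l.count a < c a) :
    ∃! a, a ∈ l ∧ IsExtendable c (a :: l) := by
  obtain ⟨y, hf⟩ := Option.isSome_iff_exists.1
    ((List.find?_isSome (p := fun a => decide (l.count a < c a)) (xs := l)).2 (by simpa using hp))
  obtain ⟨hy, u, v, rfl, hu⟩ := List.find?_eq_some_iff_append.1 hf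
  simp only [decide_eq_true_eq] at hy
  have hu' : ∀ z ∈ u, (u ++ y :: v).count z = c z := fun z hz =>
    (h.count_le z).antisymm (by simpa using hu z hz)
  exact ⟨y, ⟨by simp, h.cons_of_append hu' hy⟩, fun a ha => ha.2.eq_of_append ha.1 hu' hy⟩

end IsExtendable

section Extensions

variable {α : Type*} [DecidableEq α] [Fintype α]

open Classical in
/-- The extendable words obtained from `p` by adding `N` letters in front, one at a time. -/
noncomputable def extensions (c : α → ℕ) : ℕ → List α → Finset (List α)
  | 0, p => {p}
  | N + 1, p =>
    (Finset.univ.filter fun a => IsExtendable c (a :: p)).biUnion fun a => extensions c N (a :: p)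

theorem mem_extensions {c : α → ℕ} {N : ℕ} {p l : List α} (hp : IsExtendable c p) :
    l ∈ extensions c N p ↔ l.length = p.length + N ∧ p <:+ l ∧ IsExtendable c l := by
  induction N generalizing p with
  | zero =>
    simp only [extensions, Finset.mem_singleton]
    constructor
    · rintro rfl
      exact ⟨rfl, List.suffix_rfl, hp⟩
    · rintro ⟨hl, hs, -⟩
      exact (hs.eq_of_length hl.symm).symm
  | succ N ih =>
    simp only [extensions, Finset.mem_biUnion, Finset.mem_filter, Finset.mem_univ, true_and]
    constructor
    · rintro ⟨a, ha, hl⟩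
      obtain ⟨h₁, h₂, h₃⟩ := (ih ha).1 hl
      exact ⟨by rw [h₁, List.length_cons]; omega, (List.suffix_cons a p).trans h₂, h₃⟩
    · rintro ⟨h₁, ⟨t, rfl⟩, h₃⟩
      rcases List.eq_nil_or_concat t with rfl | ⟨t, a, rfl⟩
      · simp at h₁
      · have hs : a :: p <:+ t.concat a ++ p := ⟨t, by simp⟩
        have ha := h₃.of_suffix hs
        exact ⟨a, ha, (ih ha).2 ⟨by rw [h₁, List.length_cons]; omega, hs, h₃⟩⟩

open Classical in
theorem card_extensions_succ (c : α → ℕ) (N : ℕ) (p : List α) :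
    (extensions c (N + 1) p).card =
      ∑ a with IsExtendable c (a :: p), (extensions c N (a :: p)).card := by
  rw [extensions, Finset.card_biUnion]
  intro a ha b hb hab
  simp only [Finset.coe_filter, Finset.mem_univ, true_and] at ha hb
  rw [Function.onFun, Finset.disjoint_left]
  intro l hla hlb
  have h₁ := ((mem_extensions ha).1 hla).2.1
  have h₂ := ((mem_extensions hb).1 hlb).2.1
  have := (List.suffix_of_suffix_length_le h₁ h₂ (by simp)).eq_of_length (by simp)
  exact hab (List.cons.inj this).1

theorem sum_count_eq_length (l : List α) : ∑ a, l.count a = l.length := by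
  simpa using Multiset.sum_count_eq_card (m := (l : Multiset α)) (fun a _ => Finset.mem_univ a)

/-- The letters not occurring in a word. -/
def unusedLetters (p : List α) : Finset α := Finset.univ.filter (· ∉ p)

theorem mem_unusedLetters {p : List α} {a : α} : a ∈ unusedLetters p ↔ a ∉ p := by
  simp [unusedLetters]

theorem unusedLetters_cons (a : α) (p : List α) :
    unusedLetters (a :: p) = (unusedLetters p).erase a := by
  ext b
  simp [unusedLetters]

theorem sum_unusedLetters_add {c : α → ℕ} {N : ℕ} {p : List α} (hN : p.length + N = ∑ a, c a)
    (hp : IsExtendable c p) :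
    ∑ a ∈ unusedLetters p, c a + ∑ a with a ∈ p, (c a - p.count a) = N := by
  have h₁ : ∑ a, (c a - p.count a) + ∑ a, p.count a = ∑ a, c a := by
    rw [← Finset.sum_add_distrib]
    exact Finset.sum_congr rfl fun a _ => Nat.sub_add_cancel (hp.count_le a)
  rw [sum_count_eq_length, ← Finset.sum_filter_add_sum_filter_not _ (· ∈ p)] at h₁
  have h₂ : ∑ a with a ∉ p, (c a - p.count a) = ∑ a ∈ unusedLetters p, c a :=
    Finset.sum_congr rfl fun a ha => by
      rw [List.count_eq_zero_of_not_mem (mem_unusedLetters.1 ha), Nat.sub_zero]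
  omega

/-- A ballot-type count: the number of ways to complete an extendable word depends only on the
number of missing letters and the total multiplicity of the letters not used so far. -/
theorem card_extensions {c : α → ℕ} (hc : ∀ a, 0 < c a) {N : ℕ} {p : List α}
    (hp : IsExtendable c p) (hN : p.length + N = ∑ a, c a) :
    ((N : ℤ) + 1) * (extensions c N p).card =
      (N + 1 - ∑ a ∈ unusedLetters p, (c a : ℤ)) *
        (N + 1).descFactorial (unusedLetters p).card := by
  classical
  induction N generalizing p with
  | zero =>
    have h₁ := sum_unusedLetters_add hN hp
    have h₂ : unusedLetters p = ∅ := by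
      rw [Nat.add_eq_zero_iff] at h₁
      refine Finset.eq_empty_of_forall_notMem fun a ha => ?_
      exact (hc a).ne' ((Finset.sum_eq_zero_iff.1 h₁.1) a ha)
    simp [h₂, extensions]
  | succ N ih =>
    have hsum := sum_unusedLetters_add hN hp
    set S := unusedLetters p with hS
    set k := S.card with hk
    set C : ℤ := ∑ a ∈ S, (c a : ℤ) with hC
    have hkC : (k : ℤ) ≤ C := by
      rw [hC, hk, Finset.card_eq_sum_ones]
      push_cast
      exact Finset.sum_le_sum fun a _ => by exact_mod_cast hc a
    have hCN : C ≤ N + 1 := by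
      rw [hC]
      exact_mod_cast (Nat.le_add_right _ _).trans hsum.le
    have hnew : ∀ a ∈ S, ((N : ℤ) + 1) * (extensions c N (a :: p)).card =
        (N + 1 - C + c a) * (N + 1).descFactorial (k - 1) := by
      intro a ha
      have hap := mem_unusedLetters.1 ha
      rw [ih (hp.cons_of_notMem hap (hc a)) (by rw [List.length_cons]; omega),
        unusedLetters_cons, Finset.card_erase_of_mem ha]
      have := Finset.add_sum_erase S (fun a => (c a : ℤ)) ha
      rw [← hS, hC, ← this]
      ring
    have hold : ∀ a ∈ p, IsExtendable c (a :: p) →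
        ((N : ℤ) + 1) * (extensions c N (a :: p)).card =
          (N + 1 - C) * (N + 1).descFactorial k := by
      intro a ha hap
      rw [ih hap (by rw [List.length_cons]; omega), unusedLetters_cons,
        Finset.erase_eq_of_notMem (fun h => mem_unusedLetters.1 h ha)]
    have hsumOld : ∑ a with IsExtendable c (a :: p) ∧ a ∈ p,
        ((N : ℤ) + 1) * (extensions c N (a :: p)).card =
          (N + 1 - C) * (N + 1).descFactorial k := by
      by_cases hpend : ∃ a ∈ p, p.count a < c a
      · obtain ⟨y, hy, huniq⟩ := hp.existsUnique_cons hpend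
        have : (Finset.univ.filter fun a => IsExtendable c (a :: p) ∧ a ∈ p) = {y} := by
          ext a
          simp only [Finset.mem_filter, Finset.mem_univ, true_and, Finset.mem_singleton]
          exact ⟨fun h => huniq a h.symm, fun h => h ▸ hy.symm⟩
        rw [this, Finset.sum_singleton, hold y hy.1 hy.2]
      · have hempty : (Finset.univ.filter fun a => IsExtendable c (a :: p) ∧ a ∈ p) = ∅ := by
          refine Finset.filter_eq_empty_iff.2 fun a _ h => hpend ⟨a, h.2, h.1.count_lt_of_cons⟩
        have hzero : ∑ a with a ∈ p, (c a - p.count a) = 0 := by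
          refine Finset.sum_eq_zero fun a ha => ?_
          have : ¬ p.count a < c a := fun h => hpend ⟨a, (Finset.mem_filter.1 ha).2, h⟩
          omega
        have hCeq : C = N + 1 := by
          rw [hzero, add_zero] at hsum
          rw [hC]
          exact_mod_cast hsum
        rw [hempty, Finset.sum_empty, hCeq, sub_self, zero_mul]
    have hfilter : (Finset.univ.filter fun a => IsExtendable c (a :: p) ∧ a ∉ p) = S := by
      ext a
      simp only [Finset.mem_filter, Finset.mem_univ, true_and, hS, mem_unusedLetters]
      exact ⟨fun h => h.2, fun h => ⟨hp.cons_of_notMem h (hc a), h⟩⟩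
    have hrec : ((N : ℤ) + 1) * (extensions c (N + 1) p).card =
        (N + 1 - C) * (N + 1).descFactorial k +
          (k * (N + 1 - C) + C) * (N + 1).descFactorial (k - 1) := by
      rw [card_extensions_succ, Nat.cast_sum, Finset.mul_sum,
        ← Finset.sum_filter_add_sum_filter_not _ (· ∈ p), Finset.filter_filter,
        Finset.filter_filter, hsumOld, hfilter, Finset.sum_congr rfl hnew, ← Finset.sum_mul,
        Finset.sum_add_distrib, Finset.sum_const, nsmul_eq_mul]
    have hN0 : (N : ℤ) + 1 ≠ 0 := by positivity
    refine mul_left_cancel₀ hN0 ?_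
    rw [mul_left_comm, hrec]
    rcases Nat.eq_zero_or_pos k with hk0 | hkpos
    · have hC0 : C = 0 := by
        rw [hC, Finset.card_eq_zero.1 (hk.symm.trans hk0), Finset.sum_empty]
      rw [hk0, hC0]
      push_cast
      simp only [Nat.descFactorial_zero]
      push_cast
      ring
    · obtain ⟨k', hk'⟩ : ∃ k', k = k' + 1 := ⟨k - 1, by omega⟩
      have hle : k' ≤ N + 1 := by
        have := hkC.trans hCN
        omega
      rw [hk', Nat.add_sub_cancel, Nat.succ_descFactorial_succ (N + 1) k',
        Nat.descFactorial_succ (N + 1) k']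
      push_cast [hle]
      ring

end Extensions

section Labellings

variable {n j : ℕ}

/-- A labelling of the positions by `Fin j` such that the class with label `r` has `c r` elements
and distinct classes do not cross. -/
structure IsNoncrossingLabelling (c : Fin j → ℕ) (L : Fin n → Fin j) : Prop where
  card_fiber : ∀ r, (Finset.univ.filter fun x => L x = r).card = c r
  noncrossing : ∀ p₁ q₁ p₂ q₂, p₁ < q₁ → q₁ < p₂ → p₂ < q₂ → L p₁ = L p₂ → L q₁ = L q₂ →
    L p₁ = L q₁

theorem count_ofFn (L : Fin n → Fin j) (r : Fin j) :
    (List.ofFn L).count r = (Finset.univ.filter fun x => L x = r).card := by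
  rw [← Multiset.coe_count, ← Fin.univ_val_map, Multiset.count_map, Finset.card_def,
    Finset.filter_val]
  simp only [eq_comm]

theorem sublist_ofFn_iff (L : Fin n → Fin j) (a b c d : Fin j) :
    [a, b, c, d].Sublist (List.ofFn L) ↔
      ∃ p q r s, p < q ∧ q < r ∧ r < s ∧ L p = a ∧ L q = b ∧ L r = c ∧ L s = d := by
  constructor
  · intro h
    obtain ⟨f, hf⟩ := List.sublist_iff_exists_fin_orderEmbedding_get_eq.1 h
    let g : Fin 4 → Fin n := fun i => Fin.cast (List.length_ofFn (f := L)) (f i)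
    have hg : ∀ i k : Fin 4, i < k → g i < g k := fun i k hik => f.strictMono hik
    have hL : ∀ i : Fin 4, L (g i) = [a, b, c, d].get i := fun i => by
      rw [hf i, List.get_ofFn]
    exact ⟨g 0, g 1, g 2, g 3, hg 0 1 (by decide), hg 1 2 (by decide), hg 2 3 (by decide),
      hL 0, hL 1, hL 2, hL 3⟩
  · rintro ⟨p, q, r, s, hpq, hqr, hrs, rfl, rfl, rfl, rfl⟩
    rw [List.ofFn_eq_map]
    refine List.Sublist.map L (l₁ := [p, q, r, s]) ?_
    refine List.sublist_of_subperm_of_pairwise (r := (· < ·)) ?_ ?_ ?_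
    · exact List.subperm_of_subset (by simp; omega) (fun x _ => List.mem_finRange x)
    · simp; omega
    · exact List.pairwise_lt_finRange n

theorem isNoncrossingLabelling_iff {c : Fin j → ℕ} (hsum : ∑ r, c r = n) (L : Fin n → Fin j) :
    IsNoncrossingLabelling c L ↔ IsExtendable c (List.ofFn L) := by
  constructor
  · intro h
    have hcount : ∀ a, (List.ofFn L).count a = c a := fun a => by rw [count_ofFn, h.card_fiber]
    refine ⟨fun a => (hcount a).le, fun a b hab hs => ?_, fun a b _ _ => hcount b⟩
    obtain ⟨p, q, r, s, hpq, hqr, hrs, rfl, rfl, hr, hs⟩ := (sublist_ofFn_iff L a b a b).1 hs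
    exact hab (h.noncrossing p q r s hpq hqr hrs hr.symm hs.symm)
  · intro h
    refine ⟨fun a => ?_, fun p q r s hpq hqr hrs hpr hqs => ?_⟩
    · rw [← count_ofFn]
      refine (Finset.sum_eq_sum_iff_of_le fun a _ => h.count_le a).1 ?_ a (Finset.mem_univ a)
      rw [sum_count_eq_length, List.length_ofFn, hsum]
    · by_contra hne
      exact h.not_crossing _ _ hne
        ((sublist_ofFn_iff L _ _ _ _).2 ⟨p, q, r, s, hpq, hqr, hrs, rfl, rfl, hpr.symm, hqs.symm⟩)

open Classical in
theorem card_isNoncrossingLabelling (hn : 1 ≤ n) {c : Fin j → ℕ} (hpos : ∀ r, 1 ≤ c r)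
    (hsum : ∑ r, c r = n) :
    (Finset.univ.filter fun L : Fin n → Fin j => IsNoncrossingLabelling c L).card =
      n.descFactorial (j - 1) := by
  have hcard : (Finset.univ.filter fun L : Fin n → Fin j => IsNoncrossingLabelling c L).card =
      (extensions c n []).card := by
    refine Finset.card_bij (fun L _ => List.ofFn L) ?_ ?_ ?_
    · intro L hL
      rw [mem_extensions (IsExtendable.nil c)]
      exact ⟨by simp, List.nil_suffix,
        (isNoncrossingLabelling_iff hsum L).1 (Finset.mem_filter.1 hL).2⟩
    · intro L _ L' _ h
      exact List.ofFn_injective h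
    · intro l hl
      obtain ⟨hlen, -, hext⟩ := (mem_extensions (IsExtendable.nil c)).1 hl
      obtain rfl : l.length = n := by simpa using hlen
      refine ⟨l.get, ?_, List.ofFn_get l⟩
      rw [Finset.mem_filter, isNoncrossingLabelling_iff hsum, List.ofFn_get]
      exact ⟨Finset.mem_univ _, hext⟩
  have h := card_extensions hpos (IsExtendable.nil c) (N := n) (by simp [hsum])
  have hS : unusedLetters ([] : List (Fin j)) = Finset.univ := by simp [unusedLetters]
  have hc : ∑ r, (c r : ℤ) = n := by exact_mod_cast hsum
  obtain ⟨k, rfl⟩ : ∃ k, j = k + 1 := by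
    rcases j with _ | k
    · simp only [Finset.univ_eq_empty, Finset.sum_empty] at hsum
      omega
    · exact ⟨k, rfl⟩
  rw [hS, hc, Finset.card_univ, Fintype.card_fin, Nat.succ_descFactorial_succ] at h
  rw [hcard, Nat.add_sub_cancel]
  have hn0 : (n : ℤ) + 1 ≠ 0 := by positivity
  push_cast at h
  rw [add_sub_cancel_left, one_mul] at h
  exact_mod_cast mul_left_cancel₀ hn0 h

/-- The labelling `L` is constant exactly on the classes of the partition `P`. -/
def IsLabellingOf (L : Fin n → Fin j) (P : Finpartition (Finset.univ : Finset (Fin n))) : Prop :=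
  ∀ x y, L x = L y ↔ P.part x = P.part y

theorem isNoncrossing_iff_part (P : Finpartition (Finset.univ : Finset (Fin n))) :
    IsNoncrossing P ↔ ∀ p₁ q₁ p₂ q₂, p₁ < q₁ → q₁ < p₂ → p₂ < q₂ → P.part p₁ = P.part p₂ →
      P.part q₁ = P.part q₂ → P.part p₁ = P.part q₁ := by
  constructor
  · intro h p₁ q₁ p₂ q₂ h₁ h₂ h₃ hp hq
    by_contra hne
    refine h ⟨p₁, q₁, p₂, q₂, h₁, h₂, h₃, P.part p₁, P.part_mem.2 (Finset.mem_univ _),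
      P.part q₁, P.part_mem.2 (Finset.mem_univ _), hne, P.mem_part_self.2 (Finset.mem_univ _), ?_,
      P.mem_part_self.2 (Finset.mem_univ _), ?_⟩
    · rw [hp]
      exact P.mem_part_self.2 (Finset.mem_univ _)
    · rw [hq]
      exact P.mem_part_self.2 (Finset.mem_univ _)
  · rintro h ⟨p₁, q₁, p₂, q₂, h₁, h₂, h₃, B, hB, C, hC, hne, hp₁, hp₂, hq₁, hq₂⟩
    have := h p₁ q₁ p₂ q₂ h₁ h₂ h₃
    rw [P.part_eq_of_mem hB hp₁, P.part_eq_of_mem hB hp₂, P.part_eq_of_mem hC hq₁,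
      P.part_eq_of_mem hC hq₂] at this
    exact hne (this rfl rfl)

theorem IsNoncrossingLabelling.surjective {c : Fin j → ℕ} {L : Fin n → Fin j}
    (h : IsNoncrossingLabelling c L) (hpos : ∀ r, 1 ≤ c r) : Function.Surjective L := by
  intro r
  obtain ⟨x, hx⟩ := Finset.card_pos.1 ((hpos r).trans (h.card_fiber r).ge)
  exact ⟨x, (Finset.mem_filter.1 hx).2⟩

namespace IsLabellingOf

variable {L : Fin n → Fin j} {P Q : Finpartition (Finset.univ : Finset (Fin n))}

theorem part_eq (h : IsLabellingOf L P) (x : Fin n) :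
    P.part x = Finset.univ.filter fun y => L y = L x := by
  ext y
  rw [P.mem_part_iff_part_eq_part (Finset.mem_univ _) (Finset.mem_univ _), Finset.mem_filter, h y x]
  simp

theorem parts_eq (h : IsLabellingOf L P) (hL : Function.Surjective L) :
    P.parts = Finset.univ.image fun r => Finset.univ.filter fun y => L y = r := by
  ext B
  simp only [Finset.mem_image, Finset.mem_univ, true_and]
  constructor
  · intro hB
    obtain ⟨x, hx⟩ := P.nonempty_of_mem_parts hB
    exact ⟨L x, by rw [← h.part_eq, P.part_eq_of_mem hB hx]⟩
  · rintro ⟨r, rfl⟩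
    obtain ⟨x, rfl⟩ := hL r
    rw [← h.part_eq]
    exact P.part_mem.2 (Finset.mem_univ _)

theorem unique (hP : IsLabellingOf L P) (hQ : IsLabellingOf L Q) (hL : Function.Surjective L) :
    P = Q :=
  Finpartition.ext (by rw [hP.parts_eq hL, hQ.parts_eq hL])

theorem partSizes_eq (h : IsLabellingOf L P) (hL : Function.Surjective L) :
    partSizes P =
      Finset.univ.val.map fun r => (Finset.univ.filter fun y => L y = r).card := by
  have hinj : Function.Injective fun r => Finset.univ.filter fun y => L y = r := by
    intro r s hrs
    obtain ⟨x, rfl⟩ := hL r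
    have : x ∈ Finset.univ.filter fun y => L y = s := hrs.subset (by simp)
    exact (Finset.mem_filter.1 this).2
  rw [partSizes, h.parts_eq hL, Finset.image_val_of_injOn hinj.injOn, Multiset.map_map]
  rfl

theorem isNoncrossing_iff (h : IsLabellingOf L P) :
    IsNoncrossing P ↔ ∀ p₁ q₁ p₂ q₂, p₁ < q₁ → q₁ < p₂ → p₂ < q₂ → L p₁ = L p₂ → L q₁ = L q₂ →
      L p₁ = L q₁ := by
  rw [isNoncrossing_iff_part]
  simp only [h _ _]

theorem exists_of_labelling (L : Fin n → Fin j) : ∃ P, IsLabellingOf L P := by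
  classical
  refine ⟨Finpartition.ofSetoid (Setoid.ker L), fun x y => ?_⟩
  rw [← Finpartition.mem_part_iff_part_eq_part _ (Finset.mem_univ _) (Finset.mem_univ _),
    Finpartition.mem_part_ofSetoid_iff_rel, Setoid.ker_def, eq_comm]

end IsLabellingOf

theorem exists_equiv_of_map_eq {α β γ : Type*} [Fintype α] [Fintype β] {f : α → γ} {g : β → γ}
    (h : Multiset.map f Finset.univ.val = Multiset.map g Finset.univ.val) :
    ∃ e : α ≃ β, ∀ a, g (e a) = f a := by
  classical
  have hcard : ∀ k, Nonempty ({a // f a = k} ≃ {b // g b = k}) := by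
    intro k
    rw [← Fintype.card_eq, Fintype.card_subtype, Fintype.card_subtype]
    have := congrArg (Multiset.count k) h
    rw [Multiset.count_map, Multiset.count_map] at this
    simpa only [Finset.card_def, Finset.filter_val, eq_comm] using this
  exact ⟨Equiv.ofFiberEquiv fun k => (hcard k).some, Equiv.ofFiberEquiv_map _⟩

theorem exists_isNoncrossingLabelling {c : Fin j → ℕ}
    {P : Finpartition (Finset.univ : Finset (Fin n))} (hP : IsNoncrossing P)
    (hc : partSizes P = Multiset.map c Finset.univ.val) :
    ∃ L, IsNoncrossingLabelling c L ∧ IsLabellingOf L P := by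
  have hparts : partSizes P = Multiset.map (fun B : P.parts => B.1.card) Finset.univ.val := by
    rw [partSizes, ← Finset.attach_eq_univ, Finset.attach_val]
    exact (Multiset.attach_map_val' _ _).symm
  obtain ⟨e, he⟩ := exists_equiv_of_map_eq (hc.symm.trans hparts)
  let L : Fin n → Fin j := fun x => e.symm ⟨P.part x, P.part_mem.2 (Finset.mem_univ x)⟩
  have hL : IsLabellingOf L P := fun x y => by
    rw [e.symm.injective.eq_iff, Subtype.mk.injEq]
  refine ⟨L, ⟨fun r => ?_, hL.isNoncrossing_iff.1 hP⟩, hL⟩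
  rw [← he r]
  congr 1
  ext x
  rw [Finset.mem_filter, Equiv.symm_apply_eq, Subtype.ext_iff, P.part_eq_iff_mem (e r).2]
  simp

theorem fMult_eq_card_perm (c : Fin j → ℕ) :
    fMult (Multiset.map c Finset.univ.val) =
      Fintype.card {σ : Equiv.Perm (Fin j) // c ∘ σ = c} := by
  rw [DomMulAct.stabilizer_card', fMult]
  refine Finset.prod_congr (by ext; simp) fun k _ => ?_
  rw [Multiset.count_map, Fintype.card_subtype, Finset.card_def, Finset.filter_val]
  simp only [eq_comm]

open Classical in
theorem card_labellings_of_partition {c : Fin j → ℕ} (hpos : ∀ r, 1 ≤ c r)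
    {P : Finpartition (Finset.univ : Finset (Fin n))} (hP : IsNoncrossing P)
    (hc : partSizes P = Multiset.map c Finset.univ.val) :
    (Finset.univ.filter fun L => IsNoncrossingLabelling c L ∧ IsLabellingOf L P).card =
      fMult (Multiset.map c Finset.univ.val) := by
  obtain ⟨L₀, hL₀, hLP⟩ := exists_isNoncrossingLabelling hP hc
  have hsurj := hL₀.surjective hpos
  rw [fMult_eq_card_perm, Fintype.card_subtype]
  symm
  refine Finset.card_bij (fun σ _ => σ ∘ L₀) ?_ ?_ ?_
  · intro σ hσ
    have hσ' : c ∘ σ = c := (Finset.mem_filter.1 hσ).2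
    have hlab : IsLabellingOf (σ ∘ L₀) P := fun x y => by
      rw [Function.comp_apply, Function.comp_apply, σ.injective.eq_iff, hLP x y]
    refine Finset.mem_filter.2 ⟨Finset.mem_univ _, ⟨fun r => ?_, hlab.isNoncrossing_iff.1 hP⟩, hlab⟩
    obtain ⟨s, rfl⟩ := σ.surjective r
    simp only [Function.comp_apply, σ.injective.eq_iff]
    rw [hL₀.card_fiber]
    exact (congrFun hσ' s).symm
  · intro σ _ τ _ h
    exact Equiv.coe_fn_injective (hsurj.injective_comp_right h)
  · intro L hL
    obtain ⟨-, hL, hLP'⟩ := Finset.mem_filter.1 hL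
    have hker : ∀ x y, L₀ x = L₀ y ↔ L x = L y := fun x y => (hLP x y).trans (hLP' x y).symm
    choose g hg using hsurj
    have hgL : ∀ x, L (g (L₀ x)) = L x := fun x => (hker _ _).1 (hg _)
    have hinj : Function.Injective (L ∘ g) := fun r s hrs => by
      rw [← hg r, ← hg s]
      exact (hker _ _).2 hrs
    let σ : Equiv.Perm (Fin j) := Equiv.ofBijective (L ∘ g) (Finite.injective_iff_bijective.1 hinj)
    refine ⟨σ, Finset.mem_filter.2 ⟨Finset.mem_univ _, funext fun r => ?_⟩, funext hgL⟩
    change c (L (g r)) = c r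
    rw [← hL.card_fiber, ← hL₀.card_fiber]
    congr 1
    ext x
    rw [Finset.mem_filter, Finset.mem_filter, ← hker, hg]

end Labellings

/-- The number of noncrossing partitions of an `n`-element totally ordered set into `j`
classes whose multiset of class sizes is `{c₁ ≥ ⋯ ≥ c_j ≥ 1}` (with `Σ c_r = n`)
equals `n(n-1)⋯(n-j+2) / f(c₁,…,c_j)`. -/
theorem card_noncrossing_with_sizes (n j : ℕ) (hn : 1 ≤ n) (c : Fin j → ℕ)
    (hpos : ∀ r, 1 ≤ c r) (hmono : ∀ r s : Fin j, r ≤ s → c s ≤ c r)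
    (hsum : ∑ r, c r = n) :
    (Nat.card {P : Finpartition (Finset.univ : Finset (Fin n)) //
        IsNoncrossing P ∧ partSizes P = Multiset.map c Finset.univ.val} : ℚ) =
      (Nat.descFactorial n (j - 1) : ℚ) / (fMult (Multiset.map c Finset.univ.val) : ℚ) := by
  classical
  have hcount := Finset.card_mul_eq_card_mul
    (s := Finset.univ.filter fun L : Fin n → Fin j => IsNoncrossingLabelling c L)
    (t := Finset.univ.filter fun P : Finpartition (Finset.univ : Finset (Fin n)) =>
      IsNoncrossing P ∧ partSizes P = Multiset.map c Finset.univ.val)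
    IsLabellingOf (m := 1) (n := fMult (Multiset.map c Finset.univ.val)) ?_ ?_
  · rw [mul_one, card_isNoncrossingLabelling hn hpos hsum] at hcount
    have hf : (fMult (Multiset.map c Finset.univ.val) : ℚ) ≠ 0 :=
      Nat.cast_ne_zero.2 (Finset.prod_ne_zero_iff.2 fun k _ => Nat.factorial_ne_zero _)
    rw [eq_div_iff hf, Nat.card_eq_fintype_card, Fintype.card_subtype]
    exact_mod_cast hcount.symm
  · intro L hL
    have hL := (Finset.mem_filter.1 hL).2
    have hsurj := hL.surjective hpos
    obtain ⟨P, hP⟩ := IsLabellingOf.exists_of_labelling L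
    refine Finset.card_eq_one.2 ⟨P, Finset.ext fun Q => ?_⟩
    rw [Finset.mem_bipartiteAbove, Finset.mem_filter, Finset.mem_singleton]
    refine ⟨fun hQ => hQ.2.unique hP hsurj, ?_⟩
    rintro rfl
    refine ⟨⟨Finset.mem_univ _, hP.isNoncrossing_iff.2 hL.noncrossing, ?_⟩, hP⟩
    rw [hP.partSizes_eq hsurj]
    simp only [hL.card_fiber]
  · intro P hP
    obtain ⟨-, hP, hc⟩ := Finset.mem_filter.1 hP
    rw [← card_labellings_of_partition hpos hP hc, Finset.bipartiteBelow, Finset.filter_filter]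
end

section
/- For every noncrossing partition π of {1,…,n}, if the class-size multiset of π is {c₁,…,c_j} (non-ascending) and the class-size multiset of its Kreweras complement KC(π) is {b₁,…,b_{n-j+1}} (non-ascending), then the number of noncrossing partitions of {1,…,n} with exactly these two data equals n·(n-j)!·(j-1)! / (f(b₁,…,b_{n-j+1})·f(c₁,…,c_j)). -/
/-- Halve an index of the interlaced set `1,1̄,2,2̄,…,n,n̄`. -/
def half {n : ℕ} (x : Fin (2 * n)) : Fin n := ⟨x.val / 2, by omega⟩

/-- `x` and `y` lie in the same class of the union partition `π ∪ σ` of the interlaced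
set, `π` on even positions (original copy), `σ` on odd positions (barred copy). -/
def togetherIn {n : ℕ} (π σ : Finpartition (Finset.univ : Finset (Fin n)))
    (x y : Fin (2 * n)) : Prop :=
  (x.val % 2 = 0 ∧ y.val % 2 = 0 ∧ ∃ B ∈ π.parts, half x ∈ B ∧ half y ∈ B) ∨
  (x.val % 2 = 1 ∧ y.val % 2 = 1 ∧ ∃ B ∈ σ.parts, half x ∈ B ∧ half y ∈ B)

/-- The union `π ∪ σ` is noncrossing on the interlaced `2n`-element set. -/
def InterlacedNoncrossing {n : ℕ}
    (π σ : Finpartition (Finset.univ : Finset (Fin n))) : Prop :=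
  ¬ ∃ p₁ q₁ p₂ q₂ : Fin (2 * n), p₁ < q₁ ∧ q₁ < p₂ ∧ p₂ < q₂ ∧
      togetherIn π σ p₁ p₂ ∧ togetherIn π σ q₁ q₂ ∧ ¬ togetherIn π σ p₁ q₁

/-- `σ'` refines `σ`. -/
def Refines {n : ℕ} (σ' σ : Finpartition (Finset.univ : Finset (Fin n))) : Prop :=
  ∀ B ∈ σ'.parts, ∃ C ∈ σ.parts, B ⊆ C

/-- `σ` is the Kreweras complement of `π`: the biggest noncrossing partition of the
barred copy whose union with `π` is noncrossing on the interlaced set. -/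
def IsKreweras {n : ℕ} (π σ : Finpartition (Finset.univ : Finset (Fin n))) : Prop :=
  IsNoncrossing σ ∧ InterlacedNoncrossing π σ ∧
    ∀ σ' : Finpartition (Finset.univ : Finset (Fin n)),
      IsNoncrossing σ' → InterlacedNoncrossing π σ' → Refines σ' σ

structure IsComplementaryPair {n : ℕ} {J K : Type*} (f : Fin n → J) (g : Fin n → K) : Prop where
  noncrossing : ∀ p q r s, p < q → q < r → r < s → f p = f r → f q = f s → f p = f q
  eq_iff : ∀ i j, g i = g j ↔
    ∀ x y, f x = f y → ((x ≤ i ↔ x ≤ j) ↔ (y ≤ i ↔ y ≤ j))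

theorem finRotate_le_finRotate_iff {n : ℕ} (x y : Fin (n + 1)) :
    finRotate (n + 1) x ≤ finRotate (n + 1) y ↔
      (x ≤ y ↔ (x = Fin.last n ↔ y = Fin.last n)) := by
  simp only [Fin.le_def, coe_finRotate]
  split_ifs <;> simp only [Fin.ext_iff, Fin.val_last] at * <;> omega

namespace IsComplementaryPair
variable {n : ℕ} {J K : Type*}

theorem rotate {f : Fin (n + 1) → J} {g : Fin (n + 1) → K} (h : IsComplementaryPair f g) :
    IsComplementaryPair (f ∘ finRotate (n + 1)) (g ∘ finRotate (n + 1)) := by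
  constructor
  · intro p q r s hpq hqr hrs h1 h2
    simp only [Function.comp_apply] at *
    have hval : ∀ x : Fin (n + 1), x < s → (finRotate (n + 1) x).val = x + 1 := fun x hx =>
      coe_finRotate_of_ne_last (hx.trans_le (Fin.le_last s)).ne
    have hp := hval p (hpq.trans (hqr.trans hrs))
    have hq := hval q (hqr.trans hrs)
    have hr := hval r hrs
    have hpq' : finRotate (n + 1) p < finRotate (n + 1) q := by rw [Fin.lt_def]; omega
    have hqr' : finRotate (n + 1) q < finRotate (n + 1) r := by rw [Fin.lt_def]; omega
    by_cases hs : s = Fin.last n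
    · have hsp : finRotate (n + 1) s < finRotate (n + 1) p := by
        rw [hs, finRotate_last, Fin.lt_def, hp]; exact Nat.succ_pos _
      have := h.noncrossing _ _ _ _ hsp hpq' hqr' h2.symm h1
      rw [h2, this]
    · have hrs' : finRotate (n + 1) r < finRotate (n + 1) s := by
        rw [Fin.lt_def, coe_finRotate_of_ne_last hs]; omega
      exact h.noncrossing _ _ _ _ hpq' hqr' hrs' h1 h2
  · intro i j
    have hparity : ∀ x : Fin (n + 1),
        (finRotate (n + 1) x ≤ finRotate (n + 1) i ↔ finRotate (n + 1) x ≤ finRotate (n + 1) j) ↔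
          ((x ≤ i ↔ x ≤ j) ↔ (i = Fin.last n ↔ j = Fin.last n)) := by
      intro x
      simp only [finRotate_le_finRotate_iff]
      by_cases x = Fin.last n <;> by_cases i = Fin.last n <;> by_cases j = Fin.last n <;>
        simp only [*] <;> tauto
    simp only [Function.comp_apply, h.eq_iff]
    rw [← (finRotate (n + 1)).forall_congr_right]
    refine forall_congr' fun x => ?_
    rw [← (finRotate (n + 1)).forall_congr_right]
    refine forall_congr' fun y => imp_congr_right fun _ => ?_
    rw [hparity, hparity]
    by_cases hij : i = Fin.last n ↔ j = Fin.last n <;>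
      simp only [hij, iff_true, iff_false, not_iff_not]

theorem snoc_iff_of_notMem_range_left {f : Fin (n + 1) → J} {g : Fin (n + 1) → K} {a : J} {b : K}
    (ha : ∀ x, f x ≠ a) :
    IsComplementaryPair (Fin.snoc f a : Fin (n + 2) → J) (Fin.snoc g b : Fin (n + 2) → K) ↔
      IsComplementaryPair f g ∧ g (Fin.last n) = b := by
  constructor
  · intro h
    refine ⟨⟨fun p q r s hpq hqr hrs h1 h2 => ?_, fun i j => ?_⟩, ?_⟩
    · simpa using h.noncrossing p.castSucc q.castSucc r.castSucc s.castSucc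
        (by simpa) (by simpa) (by simpa) (by simpa) (by simpa)
    · simpa [Fin.forall_fin_succ' (n := n + 1), ha, fun x => (ha x).symm] using
        h.eq_iff i.castSucc j.castSucc
    · simpa [Fin.forall_fin_succ' (n := n + 1), ha, fun x => (ha x).symm, Fin.le_last] using
        h.eq_iff (Fin.last n).castSucc (Fin.last (n + 1))
  · rintro ⟨h, rfl⟩
    constructor
    · have := h.noncrossing
      simpa [Fin.forall_fin_succ' (n := n + 1), ha, fun x => (ha x).symm, (Fin.le_last _).not_gt] using this
    · have := h.eq_iff
      simp only [Fin.forall_fin_succ' (n := n + 1), Fin.snoc_castSucc, Fin.snoc_last]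
      simp [ha, fun x => (ha x).symm, this, Fin.le_last]

theorem snoc_iff_of_notMem_range_right {f : Fin (n + 1) → J} {g : Fin (n + 1) → K} {a : J} {b : K}
    (hb : ∀ x, g x ≠ b) :
    IsComplementaryPair (Fin.snoc f a : Fin (n + 2) → J) (Fin.snoc g b : Fin (n + 2) → K) ↔
      IsComplementaryPair f g ∧ f 0 = a := by
  have hzero (h : IsComplementaryPair (Fin.snoc f a : Fin (n + 2) → J)
      (Fin.snoc g b : Fin (n + 2) → K)) : f 0 = a := by
    classical
    by_contra h0
    obtain ⟨p, hp, hmin⟩ := exists_minimal_of_wellFoundedLT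
      (fun x => (Fin.snoc f a : Fin (n + 2) → J) x = a) ⟨Fin.last _, by simp⟩
    obtain ⟨q, rfl⟩ : ∃ q, p = Fin.succ q := by
      refine Fin.exists_succ_eq.2 ?_ |>.imp fun _ => Eq.symm
      rintro rfl
      exact h0 (by simpa using hp)
    have hlt : ∀ x, x ≤ q.castSucc ↔ x < q.succ := fun x => Fin.le_castSucc_iff
    have hcross : ∀ x y : Fin (n + 2), (Fin.snoc f a : Fin (n + 2) → J) x =
        (Fin.snoc f a : Fin (n + 2) → J) y → x < q.succ → y < q.succ := by
      intro x y hxy hx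
      by_contra! hy
      have hxa : (Fin.snoc f a : Fin (n + 2) → J) x ≠ a := fun hxa =>
        (hmin hxa hx.le).not_gt hx
      have hyq : q.succ < y := lt_of_le_of_ne hy (by rintro rfl; exact hxa (hxy.trans hp))
      have hyl : y < Fin.last _ := lt_of_le_of_ne (Fin.le_last _) (by
        rintro rfl; exact hxa (hxy.trans (by simp)))
      exact hxa ((h.noncrossing _ _ _ _ hx hyq hyl hxy (by simpa using hp)).trans hp)
    refine hb q ?_
    have := (h.eq_iff q.castSucc (Fin.last _)).2 fun x y hxy => by
      simpa [hlt, Fin.le_last] using ⟨hcross x y hxy, hcross y x hxy.symm⟩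
    simpa using this
  have hparity (ha : f 0 = a) (i j : Fin (n + 1)) :
      (∀ x y : Fin (n + 2), (Fin.snoc f a : Fin (n + 2) → J) x = (Fin.snoc f a : Fin (n + 2) → J) y →
        ((x ≤ i.castSucc ↔ x ≤ j.castSucc) ↔ (y ≤ i.castSucc ↔ y ≤ j.castSucc))) ↔
      ∀ x y, f x = f y → ((x ≤ i ↔ x ≤ j) ↔ (y ≤ i ↔ y ≤ j)) := by
    simp only [Fin.forall_fin_succ' (n := n + 1), Fin.snoc_castSucc, Fin.snoc_last,
      Fin.castSucc_le_castSucc_iff, (Fin.castSucc_lt_last _).not_ge, true_iff, iff_true]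
    refine ⟨fun h x => (h.1 x).1, fun h => ⟨fun x => ⟨h x, fun hx => ?_⟩, fun y hy => ?_, ?_⟩⟩
    · simpa using h x 0 (hx.trans ha.symm)
    · simpa using h 0 y (ha.trans hy)
    · simp
  constructor
  · intro h
    have h0 := hzero h
    refine ⟨⟨fun p q r s hpq hqr hrs h1 h2 => ?_, fun i j => ?_⟩, h0⟩
    · simpa using h.noncrossing p.castSucc q.castSucc r.castSucc s.castSucc
        (by simpa) (by simpa) (by simpa) (by simpa) (by simpa)
    · rw [← hparity h0, ← h.eq_iff, Fin.snoc_castSucc, Fin.snoc_castSucc]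
  · rintro ⟨h, h0⟩
    constructor
    · have hlast : ∀ p q r : Fin (n + 1), p < q → q < r → f p = f r → f q = a → f p = a := by
        intro p q r hpq hqr h1 h2
        rcases eq_or_ne p 0 with rfl | hp
        · exact h0
        · exact (h.noncrossing 0 p q r (Fin.pos_iff_ne_zero.2 hp) hpq hqr (h0.trans h2.symm)
            h1).symm.trans h0
      simp only [Fin.forall_fin_succ' (n := n + 1), Fin.snoc_castSucc, Fin.snoc_last]
      simpa [(Fin.le_last _).not_gt] using fun p q r =>
        And.intro (h.noncrossing p q r) fun hpq hqr h1 h2 => (hlast p q r hpq hqr h1 h2).trans h2.symm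
    · intro i j
      cases i using Fin.lastCases with
      | last =>
        cases j using Fin.lastCases with
        | last => simp
        | cast j => 
          refine iff_of_false ?_ ?_
          · simpa using (hb j).symm
          · intro hj
            simpa [(Fin.castSucc_lt_last _).not_ge, Fin.le_last] using hj 0 (Fin.last _) (by simpa using h0)
      | cast i =>
        cases j using Fin.lastCases with
        | last =>
          refine iff_of_false ?_ ?_
          · simpa using hb i
          · intro hj
            simpa [(Fin.castSucc_lt_last _).not_ge, Fin.le_last] using hj 0 (Fin.last _) (by simpa using h0)
        | cast j => rw [hparity h0, ← h.eq_iff, Fin.snoc_castSucc, Fin.snoc_castSucc]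

end IsComplementaryPair

theorem isComplementaryPair_congr {n : ℕ} {J K J' K' : Type*} {f : Fin n → J} {g : Fin n → K}
    {f' : Fin n → J'} {g' : Fin n → K'} (hf : ∀ x y, f x = f y ↔ f' x = f' y)
    (hg : ∀ x y, g x = g y ↔ g' x = g' y) :
    IsComplementaryPair f g ↔ IsComplementaryPair f' g' := by
  constructor <;> intro h <;> constructor
  · simpa only [hf] using h.noncrossing
  · simpa only [hf, hg] using h.eq_iff
  · simpa only [hf] using h.noncrossing
  · simpa only [hf, hg] using h.eq_iff

section Counting

open Finset
open scoped Classical Nat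

variable {J K : Type*} [Fintype J] [Fintype K] {n : ℕ}

/-- Complementary pairs of labellings of `Fin n` with prescribed fibre cardinalities; labels with
empty fibre are allowed. -/
noncomputable def labelledPairs (n : ℕ) (c : J → ℕ) (b : K → ℕ) :
    Finset ((Fin n → J) × (Fin n → K)) :=
  {fg | IsComplementaryPair fg.1 fg.2 ∧ (∀ i, #{x | fg.1 x = i} = c i) ∧
    ∀ m, #{x | fg.2 x = m} = b m}

theorem mem_labelledPairs {c : J → ℕ} {b : K → ℕ} {fg : (Fin n → J) × (Fin n → K)} :
    fg ∈ labelledPairs n c b ↔ IsComplementaryPair fg.1 fg.2 ∧ (∀ i, #{x | fg.1 x = i} = c i) ∧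
      ∀ m, #{x | fg.2 x = m} = b m := by
  simp [labelledPairs]

theorem card_fiber_comp_equiv {L : Type*} (e : Equiv.Perm (Fin n)) (f : Fin n → L) (l : L) :
    #{x | (f ∘ e) x = l} = #{x | f x = l} :=
  card_equiv e (by simp)

theorem card_labelledPairs_filter_eq (c : J → ℕ) (b : K → ℕ) (Q : J → K → Prop)
    (p q : Fin (n + 1)) :
    #{fg ∈ labelledPairs (n + 1) c b | Q (fg.1 p) (fg.2 p)} =
      #{fg ∈ labelledPairs (n + 1) c b | Q (fg.1 q) (fg.2 q)} := by
  let d : Fin (n + 1) → ℕ := fun p => #{fg ∈ labelledPairs (n + 1) c b | Q (fg.1 p) (fg.2 p)}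
  have hle : ∀ p ∈ univ, d (finRotate (n + 1) p) ≤ d p := by
    intro p _
    refine card_le_card_of_injOn
      (fun fg => (fg.1 ∘ finRotate (n + 1), fg.2 ∘ finRotate (n + 1))) ?_ ?_
    · intro fg hfg
      simp only [coe_filter, Set.mem_ofPred_eq, mem_labelledPairs, card_fiber_comp_equiv] at hfg ⊢
      exact ⟨⟨hfg.1.1.rotate, hfg.1.2⟩, hfg.2⟩
    · rintro ⟨f, g⟩ - ⟨f', g'⟩ - h
      simpa [(finRotate (n + 1)).surjective.injective_comp_right.eq_iff] using h
  have heq := (sum_eq_sum_iff_of_le hle).1 (Equiv.sum_comp (finRotate (n + 1)) d)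
  have hzero : ∀ p, d p = d 0 := by
    intro p
    induction p using Fin.induction with
    | zero => rfl
    | succ p ih =>
      rw [← ih, ← heq p.castSucc (mem_univ _), finRotate_apply, Fin.coeSucc_eq_succ]
  exact (hzero p).trans (hzero q).symm

theorem mul_card_labelledPairs_filter (c : J → ℕ) (b : K → ℕ) (Q : J → K → Prop)
    (p : Fin (n + 1)) {k : ℕ}
    (hk : ∀ fg ∈ labelledPairs (n + 1) c b, #{x | Q (fg.1 x) (fg.2 x)} = k) :
    (n + 1) * #{fg ∈ labelledPairs (n + 1) c b | Q (fg.1 p) (fg.2 p)} =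
      k * #(labelledPairs (n + 1) c b) := by
  calc _ = ∑ q : Fin (n + 1), #{fg ∈ labelledPairs (n + 1) c b | Q (fg.1 q) (fg.2 q)} := by
        simp [card_labelledPairs_filter_eq c b Q _ p]
    _ = ∑ fg ∈ labelledPairs (n + 1) c b, #{x | Q (fg.1 x) (fg.2 x)} := by
        simp only [card_filter]; exact sum_comm
    _ = _ := by rw [sum_congr rfl hk, sum_const, smul_eq_mul, mul_comm]

theorem mul_card_labelledPairs_left (c : J → ℕ) (b : K → ℕ) (p : Fin (n + 1)) (i : J) :
    (n + 1) * #{fg ∈ labelledPairs (n + 1) c b | fg.1 p = i} =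
      c i * #(labelledPairs (n + 1) c b) :=
  mul_card_labelledPairs_filter c b (fun j _ => j = i) p fun _ h => (mem_labelledPairs.1 h).2.1 i

theorem mul_card_labelledPairs_right (c : J → ℕ) (b : K → ℕ) (p : Fin (n + 1)) (m : K) :
    (n + 1) * #{fg ∈ labelledPairs (n + 1) c b | fg.2 p = m} =
      b m * #(labelledPairs (n + 1) c b) :=
  mul_card_labelledPairs_filter c b (fun _ j => j = m) p fun _ h => (mem_labelledPairs.1 h).2.2 m

theorem card_fiber_snoc_iff {L : Type*} {f : Fin n → L} {a : L} {c : L → ℕ} (ha : 1 ≤ c a) :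
    (∀ l, #{x | (Fin.snoc f a : Fin (n + 1) → L) x = l} = c l) ↔
      ∀ l, #{x | f x = l} = Function.update c a (c a - 1) l := by
  refine forall_congr' fun l => ?_
  have : #{x | (Fin.snoc f a : Fin (n + 1) → L) x = l} = #{x | f x = l} + if a = l then 1 else 0 := by
    simp only [card_filter, Fin.sum_univ_castSucc, Fin.snoc_castSucc, Fin.snoc_last]
  rw [this]
  rcases eq_or_ne a l with rfl | hl
  · simp; omega
  · simp [hl, hl.symm]

theorem card_labelledPairs_filter_last {c : J → ℕ} {b : K → ℕ} {i : J} {m : K}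
    (hi : 1 ≤ c i) (hm : 1 ≤ b m) (R : (Fin (n + 1) → J) × (Fin (n + 1) → K) → Prop)
    (hR : ∀ f g, (∀ j, #{x | f x = j} = Function.update c i (c i - 1) j) →
      (∀ j, #{x | g x = j} = Function.update b m (b m - 1) j) →
      (IsComplementaryPair (Fin.snoc f i : Fin (n + 2) → J) (Fin.snoc g m : Fin (n + 2) → K) ↔
        IsComplementaryPair f g ∧ R (f, g))) :
    #{fg ∈ labelledPairs (n + 2) c b | fg.1 (Fin.last _) = i ∧ fg.2 (Fin.last _) = m} =
      #{fg ∈ labelledPairs (n + 1) (Function.update c i (c i - 1)) (Function.update b m (b m - 1)) |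
        R fg} := by
  symm
  refine card_bij (fun fg _ => (Fin.snoc fg.1 i, Fin.snoc fg.2 m)) ?_ ?_ ?_
  · rintro ⟨f, g⟩ h
    simp only [mem_filter, mem_labelledPairs, card_fiber_snoc_iff hi, card_fiber_snoc_iff hm] at h ⊢
    exact ⟨⟨(hR f g h.1.2.1 h.1.2.2).2 ⟨h.1.1, h.2⟩, h.1.2⟩, by simp⟩
  · rintro ⟨f, g⟩ - ⟨f', g'⟩ - h
    simpa [Fin.snoc_inj] using h
  · rintro ⟨f, g⟩ h
    simp only [mem_filter] at h
    obtain ⟨h, rfl, rfl⟩ := h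
    rw [← Fin.snoc_init_self f, ← Fin.snoc_init_self g] at h
    simp only [mem_labelledPairs, card_fiber_snoc_iff hi,
      card_fiber_snoc_iff hm] at h
    refine ⟨(Fin.init f, Fin.init g), ?_, by simp⟩
    have := (hR _ _ h.2.1 h.2.2).1 h.1
    exact mem_filter.2 ⟨mem_labelledPairs.2 ⟨this.1, h.2⟩, this.2⟩

theorem apply_ne_of_card_fiber_eq_zero {L : Type*} {f : Fin n → L} {a : L}
    (h : #{x | f x = a} = 0) (x : Fin n) : f x ≠ a := fun hx =>
  (filter_eq_empty_iff.1 (card_eq_zero.1 h)) (mem_univ x) hx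

theorem sum_sub_one_filter_pos {L : Type*} [Fintype L] (c : L → ℕ) :
    ∑ l with c l ≠ 0, (c l - 1) + #{l | c l ≠ 0} = ∑ l, c l := by
  rw [card_eq_sum_ones, ← sum_add_distrib, ← sum_filter_ne_zero (f := c)]
  exact sum_congr rfl fun l hl => Nat.sub_add_cancel (Nat.pos_of_ne_zero (mem_filter.1 hl).2)

theorem sum_eq_sub_mul {L : Type*} [Fintype L] {c D : L → ℕ} {Y : ℕ}
    (hzero : ∀ l, c l = 0 → D l = 0) (hD : ∀ l, c l ≠ 0 → D l = (c l - 1) * Y) :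
    ∑ l, D l = (∑ l, c l - #{l | c l ≠ 0}) * Y := by
  rw [← sum_sub_one_filter_pos c, Nat.add_sub_cancel, sum_mul, ← sum_congr rfl fun l hl =>
    hD l (mem_filter.1 hl).2, sum_filter]
  exact sum_congr rfl fun l _ => by split_ifs with h <;> simp_all

theorem card_labelledPairs_of_left_eq_one {c : J → ℕ} {b : K → ℕ} {i : J} {Y : ℕ} (hi : c i = 1)
    (hY : ∀ m, 2 ≤ b m →
      #(labelledPairs (n + 1) (Function.update c i 0) (Function.update b m (b m - 1))) =
        (n + 1) * Y) :
    #(labelledPairs (n + 2) c b) = (n + 2) * ((∑ m, b m - #{m | b m ≠ 0}) * Y) := by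
  have hrot := mul_card_labelledPairs_left c b (Fin.last (n + 1)) i
  rw [hi, one_mul] at hrot
  rw [← hrot, card_eq_sum_card_fiberwise (f := fun fg => fg.2 (Fin.last _)) (t := univ) (by simp)]
  simp only [filter_filter]
  congr 1
  refine sum_eq_sub_mul (fun m hm => ?_) fun m hm => ?_
  · refine card_eq_zero.2 (filter_eq_empty_iff.2 fun fg hfg h => ?_)
    exact apply_ne_of_card_fiber_eq_zero (((mem_labelledPairs.1 hfg).2.2 m).trans hm) _ h.2
  · rw [card_labelledPairs_filter_last hi.ge (Nat.one_le_iff_ne_zero.2 hm)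
      (fun fg => fg.2 (Fin.last n) = m) fun f g hf hg =>
        IsComplementaryPair.snoc_iff_of_notMem_range_left
          (apply_ne_of_card_fiber_eq_zero (by simp [hf, hi]))]
    refine Nat.eq_of_mul_eq_mul_left n.succ_pos ?_
    rw [mul_card_labelledPairs_right, Function.update_self, hi]
    rcases eq_or_ne (b m) 1 with h1 | h1
    · simp [h1]
    · rw [hY m (by omega), Nat.succ_eq_add_one]; ring

theorem card_labelledPairs_of_right_eq_one {c : J → ℕ} {b : K → ℕ} {m : K} {Y : ℕ} (hm : b m = 1)
    (hY : ∀ i, 2 ≤ c i →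
      #(labelledPairs (n + 1) (Function.update c i (c i - 1)) (Function.update b m 0)) =
        (n + 1) * Y) :
    #(labelledPairs (n + 2) c b) = (n + 2) * ((∑ i, c i - #{i | c i ≠ 0}) * Y) := by
  have hrot := mul_card_labelledPairs_right c b (Fin.last (n + 1)) m
  rw [hm, one_mul] at hrot
  rw [← hrot, card_eq_sum_card_fiberwise (f := fun fg => fg.1 (Fin.last _)) (t := univ) (by simp)]
  simp only [filter_filter, and_comm (a := _ = m)]
  congr 1
  refine sum_eq_sub_mul (fun i hi => ?_) fun i hi => ?_
  · refine card_eq_zero.2 (filter_eq_empty_iff.2 fun fg hfg h => ?_)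
    exact apply_ne_of_card_fiber_eq_zero (((mem_labelledPairs.1 hfg).2.1 i).trans hi) _ h.1
  · rw [card_labelledPairs_filter_last (Nat.one_le_iff_ne_zero.2 hi) hm.ge
      (fun fg => fg.1 0 = i) fun f g hf hg =>
        IsComplementaryPair.snoc_iff_of_notMem_range_right
          (apply_ne_of_card_fiber_eq_zero (by simp [hg, hm]))]
    refine Nat.eq_of_mul_eq_mul_left n.succ_pos ?_
    rw [mul_card_labelledPairs_left, Function.update_self, hm]
    rcases eq_or_ne (c i) 1 with h1 | h1
    · simp [h1]
    · rw [hY i (by omega), Nat.succ_eq_add_one]; ring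

theorem sum_update_sub_one {L : Type*} [Fintype L] {c : L → ℕ} {a : L} (ha : 1 ≤ c a) :
    ∑ l, Function.update c a (c a - 1) l + 1 = ∑ l, c l := by
  rw [← add_sum_erase _ _ (mem_univ a), ← add_sum_erase _ c (mem_univ a), Function.update_self,
    sum_congr rfl fun l hl => Function.update_of_ne (ne_of_mem_erase hl) (c a - 1) c,
    add_right_comm, Nat.sub_add_cancel ha]

theorem card_support_update_sub_one {L : Type*} [Fintype L] {c : L → ℕ} {a : L} (ha : 2 ≤ c a) :
    #{l | Function.update c a (c a - 1) l ≠ 0} = #{l | c l ≠ 0} := by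
  congr 1
  ext l
  rcases eq_or_ne l a with rfl | hl
  · simp; omega
  · simp [hl]

theorem card_support_update_zero {L : Type*} [Fintype L] {c : L → ℕ} {a : L} (ha : c a ≠ 0) :
    #{l | Function.update c a 0 l ≠ 0} + 1 = #{l | c l ≠ 0} := by
  rw [← card_erase_add_one (show a ∈ ({l | c l ≠ 0} : Finset L) by simpa)]
  congr 2
  ext l
  rcases eq_or_ne l a with rfl | hl <;> simp [*]

theorem exists_eq_one_or_two_mul_card_le_sum {L : Type*} [Fintype L] (c : L → ℕ) :
    (∃ l, c l = 1) ∨ 2 * #{l | c l ≠ 0} ≤ ∑ l, c l := by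
  by_contra! h
  refine h.2.not_ge ?_
  rw [← sum_filter_ne_zero (f := c), mul_comm, ← smul_eq_mul]
  exact card_nsmul_le_sum _ _ _ fun l hl => by
    have := h.1 l; have := (mem_filter.1 hl).2; omega

theorem card_support_pos {L : Type*} [Fintype L] {c : L → ℕ} (hc : ∑ l, c l ≠ 0) :
    0 < #{l | c l ≠ 0} := by
  obtain ⟨l, -, hl⟩ := exists_ne_zero_of_sum_ne_zero hc
  exact card_pos.2 ⟨l, by simpa⟩

theorem forall_card_fiber_fin_one_iff {L : Type*} [Fintype L] {c : L → ℕ} (hc : ∑ l, c l = 1) :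
    #{l | c l ≠ 0} = 1 ∧
      ∃ a, ∀ f : Fin 1 → L, (∀ l, #{x | f x = l} = c l) ↔ f = fun _ => a := by
  obtain ⟨a, -, ha⟩ := exists_ne_zero_of_sum_ne_zero (hc.trans_ne one_ne_zero)
  rw [← add_sum_erase _ c (mem_univ a)] at hc
  have h0 := sum_eq_zero_iff.1 (show ∑ l ∈ univ.erase a, c l = 0 by omega)
  have hca : ∀ l, c l = if a = l then 1 else 0 := fun l => by
    split_ifs with h
    · subst h; omega
    · exact h0 l (mem_erase.2 ⟨Ne.symm h, mem_univ l⟩)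
  refine ⟨card_eq_one.2 ⟨a, by ext; simp [hca, eq_comm]⟩, a, fun f => ?_⟩
  simp only [card_filter, Fin.sum_univ_one, hca]
  refine ⟨fun h => ?_, by rintro rfl l; rfl⟩
  ext x
  have := h a
  rw [Subsingleton.elim x 0]
  simpa using this

theorem card_labelledPairs (n : ℕ) (c : J → ℕ) (b : K → ℕ) (hc : ∑ i, c i = n + 1)
    (hb : ∑ m, b m = n + 1) (hcb : #{i | c i ≠ 0} + #{m | b m ≠ 0} = n + 2) :
    #(labelledPairs (n + 1) c b) =
      (n + 1) * ((#{i | c i ≠ 0} - 1)! * (#{m | b m ≠ 0} - 1)!) := by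
  induction n generalizing c b with
  | zero =>
    obtain ⟨hc1, a, ha⟩ := forall_card_fiber_fin_one_iff hc
    obtain ⟨hb1, m, hm⟩ := forall_card_fiber_fin_one_iff hb
    rw [hc1, hb1, card_eq_one.2 ⟨(fun _ => a, fun _ => m), ?_⟩]
    · simp
    ext ⟨f, g⟩
    simp only [mem_labelledPairs, ha, hm, mem_singleton, Prod.mk.injEq, and_iff_right_iff_imp]
    rintro ⟨rfl, rfl⟩
    exact ⟨fun _ _ _ _ _ _ _ _ _ => rfl, fun i j => by simp [Subsingleton.elim (α := Fin 1) i j]⟩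
  | succ n ih =>
    rcases exists_eq_one_or_two_mul_card_le_sum c with ⟨i, hi⟩ | hc2
    · have hsupp := card_support_update_zero (c := c) (a := i) (by omega)
      have hsum := sum_update_sub_one (c := c) (a := i) hi.ge
      rw [hi, Nat.sub_self] at hsum
      have hpos := card_support_pos (c := Function.update c i 0) (by omega)
      have hY : ∀ m, 2 ≤ b m → _ := fun m hm =>
        ih (Function.update c i 0) (Function.update b m (b m - 1)) (by omega)
          (by have := sum_update_sub_one (c := b) (a := m) (by omega); omega)
          (by rw [card_support_update_sub_one hm]; omega)
      rw [card_labelledPairs_of_left_eq_one hi fun m hm =>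
        (hY m hm).trans (by rw [card_support_update_sub_one hm]), ← hsupp, hb,
        Nat.add_sub_cancel, ← mul_assoc (_ - _),
        show n + 1 + 1 - #{m | b m ≠ 0} = #{l | Function.update c i 0 l ≠ 0} by omega,
        Nat.mul_factorial_pred hpos.ne']
    · obtain ⟨m, hm⟩ := (exists_eq_one_or_two_mul_card_le_sum b).resolve_right (by omega)
      have hsupp := card_support_update_zero (c := b) (a := m) (by omega)
      have hsum := sum_update_sub_one (c := b) (a := m) hm.ge
      rw [hm, Nat.sub_self] at hsum
      have hpos := card_support_pos (c := Function.update b m 0) (by omega)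
      have hY : ∀ i, 2 ≤ c i → _ := fun i hi =>
        ih (Function.update c i (c i - 1)) (Function.update b m 0)
          (by have := sum_update_sub_one (c := c) (a := i) (by omega); omega) (by omega)
          (by rw [card_support_update_sub_one hi]; omega)
      rw [card_labelledPairs_of_right_eq_one hm fun i hi =>
        (hY i hi).trans (by rw [card_support_update_sub_one hi]), ← hsupp, hc,
        Nat.add_sub_cancel, mul_left_comm (_ - _),
        show n + 1 + 1 - #{i | c i ≠ 0} = #{l | Function.update b m 0 l ≠ 0} by omega,
        Nat.mul_factorial_pred hpos.ne']

end Counting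

section Finpartition

variable {n : ℕ}

theorem Finpartition.part_eq_part_iff {α : Type*} [DecidableEq α] [Fintype α]
    (P : Finpartition (Finset.univ : Finset α)) {x y : α} :
    P.part x = P.part y ↔ ∃ B ∈ P.parts, x ∈ B ∧ y ∈ B := by
  rw [← P.mem_part_iff_part_eq_part (Finset.mem_univ x) (Finset.mem_univ y),
    P.mem_part_iff_exists]

theorem Finpartition.part_ofSetoid_eq_iff {α : Type*} [DecidableEq α] [Fintype α] (s : Setoid α)
    [DecidableRel s.r] {x y : α} :
    (Finpartition.ofSetoid s).part x = (Finpartition.ofSetoid s).part y ↔ s x y := by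
  rw [← Finpartition.mem_part_iff_part_eq_part _ (Finset.mem_univ x) (Finset.mem_univ y),
    Finpartition.mem_part_ofSetoid_iff_rel]
  exact ⟨s.symm, s.symm⟩

theorem refines_iff {P Q : Finpartition (Finset.univ : Finset (Fin n))} :
    Refines P Q ↔ ∀ x y, P.part x = P.part y → Q.part x = Q.part y := by
  constructor
  · intro h x y hxy
    obtain ⟨B, hB, hx, hy⟩ := P.part_eq_part_iff.1 hxy
    obtain ⟨C, hC, hBC⟩ := h B hB
    exact Q.part_eq_part_iff.2 ⟨C, hC, hBC hx, hBC hy⟩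
  · intro h B hB
    obtain ⟨x, hx⟩ := P.nonempty_of_mem_parts hB
    refine ⟨Q.part x, Q.part_mem.2 (Finset.mem_univ x), fun y hy => ?_⟩
    rw [Q.mem_part_iff_part_eq_part (Finset.mem_univ y) (Finset.mem_univ x)]
    exact h y x (P.part_eq_part_iff.2 ⟨B, hB, hy, hx⟩)

theorem finpartition_ext_part {P Q : Finpartition (Finset.univ : Finset (Fin n))}
    (h : ∀ x y, P.part x = P.part y ↔ Q.part x = Q.part y) : P = Q :=
  le_antisymm (refines_iff.2 fun x y => (h x y).1) (refines_iff.2 fun x y => (h x y).2)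

theorem isNoncrossing_iff {P : Finpartition (Finset.univ : Finset (Fin n))} :
    IsNoncrossing P ↔ ∀ p q r s, p < q → q < r → r < s → P.part p = P.part r →
      P.part q = P.part s → P.part p = P.part q := by
  constructor
  · intro h p q r s hpq hqr hrs h1 h2
    obtain ⟨B, hB, hp, hr⟩ := P.part_eq_part_iff.1 h1
    obtain ⟨C, hC, hq, hs⟩ := P.part_eq_part_iff.1 h2
    by_contra hne
    refine h ⟨p, q, r, s, hpq, hqr, hrs, B, hB, C, hC, ?_, hp, hr, hq, hs⟩
    rintro rfl
    exact hne (P.part_eq_part_iff.2 ⟨B, hB, hp, hq⟩)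
  · rintro h ⟨p, q, r, s, hpq, hqr, hrs, B, hB, C, hC, hne, hp, hr, hq, hs⟩
    have := h p q r s hpq hqr hrs (P.part_eq_part_iff.2 ⟨B, hB, hp, hr⟩)
      (P.part_eq_part_iff.2 ⟨C, hC, hq, hs⟩)
    rw [P.part_eq_of_mem hB hp, P.part_eq_of_mem hC hq] at this
    exact hne this

theorem togetherIn_iff {P Q : Finpartition (Finset.univ : Finset (Fin n))} {x y : Fin (2 * n)} :
    togetherIn P Q x y ↔
      (x.val % 2 = 0 ∧ y.val % 2 = 0 ∧ P.part (half x) = P.part (half y)) ∨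
        (x.val % 2 = 1 ∧ y.val % 2 = 1 ∧ Q.part (half x) = Q.part (half y)) := by
  simp only [togetherIn, Finpartition.part_eq_part_iff]

theorem InterlacedNoncrossing.parity {P Q : Finpartition (Finset.univ : Finset (Fin n))}
    (h : InterlacedNoncrossing P Q) {i j x y : Fin n} (hij : Q.part i = Q.part j)
    (hxy : P.part x = P.part y) : (x ≤ i ↔ x ≤ j) ↔ (y ≤ i ↔ y ≤ j) := by
  let e : Fin n → Fin (2 * n) := fun i => ⟨2 * i, by omega⟩
  let o : Fin n → Fin (2 * n) := fun i => ⟨2 * i + 1, by omega⟩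
  have hhe : ∀ x, half (e x) = x := fun x => by ext; simp only [half, e]; omega
  have hho : ∀ x, half (o x) = x := fun x => by ext; simp only [half, o]; omega
  have he : ∀ x y, P.part x = P.part y → togetherIn P Q (e x) (e y) := fun x y h =>
    togetherIn_iff.2 (Or.inl (by simp [hhe, e, h]))
  have ho : ∀ x y, Q.part x = Q.part y → togetherIn P Q (o x) (o y) := fun x y h =>
    togetherIn_iff.2 (Or.inr (by simp [hho, o, h, Nat.add_mod]))
  have heo : ∀ x y, ¬ togetherIn P Q (e x) (o y) := fun x y => by
    simp [togetherIn_iff, e, o, Nat.add_mod]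
  have hoe : ∀ x y, ¬ togetherIn P Q (o x) (e y) := fun x y => by
    simp [togetherIn_iff, e, o, Nat.add_mod]
  have key : ∀ i j x y : Fin n, Q.part i = Q.part j → P.part x = P.part y → i < x → x ≤ j →
      i < y ∧ y ≤ j := by
    intro i j x y hij hxy hix hxj
    by_contra hy
    rcases le_or_gt y i with hyi | hyi
    · exact h ⟨e y, o i, e x, o j, by simp [e, o, Fin.lt_def]; omega,
        by simp [e, o, Fin.lt_def]; omega, by simp [e, o, Fin.lt_def]; omega,
        he _ _ hxy.symm, ho _ _ hij, heo _ _⟩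
    · exact h ⟨o i, e x, o j, e y, by simp [e, o, Fin.lt_def]; omega,
        by simp [e, o, Fin.lt_def]; omega, by simp [e, o, Fin.lt_def]; omega,
        ho _ _ hij, he _ _ hxy, hoe _ _⟩
  have h1 := key i j x y hij hxy
  have h2 := key i j y x hij hxy.symm
  have h3 := key j i x y hij.symm hxy
  have h4 := key j i y x hij.symm hxy.symm
  omega

theorem interlacedNoncrossing_of_parity {P Q : Finpartition (Finset.univ : Finset (Fin n))}
    (hP : IsNoncrossing P) (hQ : IsNoncrossing Q)
    (h : ∀ i j x y, Q.part i = Q.part j → P.part x = P.part y →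
      ((x ≤ i ↔ x ≤ j) ↔ (y ≤ i ↔ y ≤ j))) : InterlacedNoncrossing P Q := by
  rintro ⟨p, q, r, s, hpq, hqr, hrs, hpr, hqs, hn⟩
  have hlt : ∀ {x y : Fin (2 * n)}, x < y → x.val % 2 = y.val % 2 → half x < half y := by
    intro x y hxy hmod
    simp only [half, Fin.lt_def] at *
    omega
  rw [isNoncrossing_iff] at hP hQ
  rw [togetherIn_iff] at hpr hqs hn
  rcases hpr with ⟨hp, hr, hpr⟩ | ⟨hp, hr, hpr⟩ <;> rcases hqs with ⟨hq, hs, hqs⟩ | ⟨hq, hs, hqs⟩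
  · exact hn (Or.inl ⟨hp, hq, hP _ _ _ _ (hlt hpq (by omega)) (hlt hqr (by omega))
      (hlt hrs (by omega)) hpr hqs⟩)
  · have := h _ _ _ _ hqs hpr
    simp only [half, Fin.le_def, Fin.lt_def] at *
    omega
  · have := h _ _ _ _ hpr hqs
    simp only [half, Fin.le_def, Fin.lt_def] at *
    omega
  · exact hn (Or.inr ⟨hp, hq, hQ _ _ _ _ (hlt hpq (by omega)) (hlt hqr (by omega))
      (hlt hrs (by omega)) hpr hqs⟩)

/-- Two elements are related when the half-open interval between them is a union of classes
of `P`. -/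
def krewerasSetoid (P : Finpartition (Finset.univ : Finset (Fin n))) : Setoid (Fin n) where
  r i j := ∀ x y, P.part x = P.part y → ((x ≤ i ↔ x ≤ j) ↔ (y ≤ i ↔ y ≤ j))
  iseqv :=
    { refl := fun i x y _ => by simp
      symm := fun h x y hxy => by
        have := h x y hxy
        tauto
      trans := fun h1 h2 x y hxy => by
        have := h1 x y hxy
        have := h2 x y hxy
        tauto }

theorem isNoncrossing_of_part_eq_iff {P Q : Finpartition (Finset.univ : Finset (Fin n))}
    (h : ∀ i j, Q.part i = Q.part j ↔ krewerasSetoid P i j) : IsNoncrossing Q := by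
  refine isNoncrossing_iff.2 fun p q r s hpq hqr hrs h1 h2 => (h p q).2 fun x y hxy => ?_
  have h1 := (h p r).1 h1 x y hxy
  have h2 := (h q s).1 h2 x y hxy
  omega

theorem isKreweras_iff {P Q : Finpartition (Finset.univ : Finset (Fin n))}
    (hP : IsNoncrossing P) :
    IsKreweras P Q ↔ ∀ i j, Q.part i = Q.part j ↔ krewerasSetoid P i j := by
  classical
  constructor
  · rintro ⟨-, hPQ, hmax⟩ i j
    refine ⟨fun hij x y => hPQ.parity hij, fun hij => ?_⟩
    have hK := fun i j => Finpartition.part_ofSetoid_eq_iff (krewerasSetoid P) (x := i) (y := j)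
    have hKN := isNoncrossing_of_part_eq_iff hK
    exact refines_iff.1 (hmax _ hKN (interlacedNoncrossing_of_parity hP hKN
      fun i j x y hij => (hK i j).1 hij x y)) i j ((hK i j).2 hij)
  · intro h
    have hQ := isNoncrossing_of_part_eq_iff h
    exact ⟨hQ, interlacedNoncrossing_of_parity hP hQ fun i j x y hij => (h i j).1 hij x y,
      fun R _ hR => refines_iff.2 fun i j hij => (h i j).2 fun x y => hR.parity hij⟩

theorem isComplementaryPair_part_iff {P Q : Finpartition (Finset.univ : Finset (Fin n))} :
    IsComplementaryPair P.part Q.part ↔ IsNoncrossing P ∧ IsKreweras P Q := by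
  constructor
  · intro h
    have hP := isNoncrossing_iff.2 h.noncrossing
    exact ⟨hP, (isKreweras_iff hP).2 h.eq_iff⟩
  · rintro ⟨hP, hPQ⟩
    exact ⟨isNoncrossing_iff.1 hP, (isKreweras_iff hP).1 hPQ⟩

end Finpartition

section Labellings

open Finset
open scoped Classical Nat

theorem card_perm_comp_eq {J : Type*} [Fintype J] (c : J → ℕ) :
    Fintype.card {e : Equiv.Perm J // c ∘ e = c} = fMult (Multiset.map c univ.val) := by
  rw [DomMulAct.stabilizer_card', fMult]
  refine prod_congr ?_ fun k _ => ?_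
  · ext; simp
  · rw [Multiset.count_map, Fintype.card_subtype]
    simp only [eq_comm (a := k)]
    rfl

theorem exists_equiv_of_map_univ_eq {I J : Type*} [Fintype I] [Fintype J] {d : I → ℕ} {c : J → ℕ}
    (h : Multiset.map d univ.val = Multiset.map c univ.val) : ∃ e : I ≃ J, c ∘ e = d := by
  have hcard (k : ℕ) : Nonempty ({i // d i = k} ≃ {j // c j = k}) := by
    rw [← Fintype.card_eq, Fintype.card_subtype, Fintype.card_subtype]
    have := congrArg (Multiset.count k) h
    simp only [Multiset.count_map, eq_comm (a := k)] at this
    exact this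
  let e (k : ℕ) := (hcard k).some
  refine ⟨(Equiv.sigmaFiberEquiv d).symm.trans ((Equiv.sigmaCongrRight e).trans
    (Equiv.sigmaFiberEquiv c)), funext fun i => ?_⟩
  exact (e (d i) ⟨i, rfl⟩).2

theorem card_equiv_comp_eq {I J : Type*} [Fintype I] [Fintype J] {d : I → ℕ} {c : J → ℕ}
    (h : Multiset.map d univ.val = Multiset.map c univ.val) :
    Fintype.card {e : I ≃ J // c ∘ e = d} = fMult (Multiset.map c univ.val) := by
  obtain ⟨e₀, rfl⟩ := exists_equiv_of_map_univ_eq h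
  rw [← card_perm_comp_eq]
  refine Fintype.card_congr ((Equiv.equivCongr e₀ (Equiv.refl J)).subtypeEquiv fun e => ?_)
  constructor
  · intro he
    ext j
    simpa using congrFun he (e₀.symm j)
  · intro he
    ext i
    simpa using congrFun he (e₀ i)

variable {n : ℕ} {J K : Type*} [Fintype J] [Fintype K]

/-- The labellings whose fibres are the classes of `P`, with prescribed class sizes. -/
noncomputable def partLabellings (P : Finpartition (univ : Finset (Fin n))) (c : J → ℕ) :
    Finset (Fin n → J) :=
  {f | (∀ x y, f x = f y ↔ P.part x = P.part y) ∧ ∀ i, #{x | f x = i} = c i}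

theorem mem_partLabellings {P : Finpartition (univ : Finset (Fin n))} {c : J → ℕ}
    {f : Fin n → J} : f ∈ partLabellings P c ↔
      (∀ x y, f x = f y ↔ P.part x = P.part y) ∧ ∀ i, #{x | f x = i} = c i := by
  simp [partLabellings]

/-- The class of `x`, as an element of the type of classes. -/
def partOf (P : Finpartition (univ : Finset (Fin n))) (x : Fin n) : P.parts :=
  ⟨P.part x, P.part_mem.2 (mem_univ x)⟩

theorem partOf_eq_iff {P : Finpartition (univ : Finset (Fin n))} {x : Fin n} {B : P.parts} :
    partOf P x = B ↔ x ∈ B.1 := by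
  rw [partOf, Subtype.ext_iff]
  exact P.part_eq_iff_mem B.2

theorem partOf_surjective (P : Finpartition (univ : Finset (Fin n))) :
    Function.Surjective (partOf P) := fun B =>
  (P.nonempty_of_mem_parts B.2).imp fun _ => partOf_eq_iff.2

theorem mem_partLabellings_iff {P : Finpartition (univ : Finset (Fin n))} {c : J → ℕ}
    (hc : ∀ i, 1 ≤ c i) {f : Fin n → J} : f ∈ partLabellings P c ↔
      ∃ e : P.parts ≃ J, c ∘ e = (fun B => #B.1) ∧ e ∘ partOf P = f := by
  have hfiber (e : P.parts ≃ J) (i : J) : #{x | (e ∘ partOf P) x = i} = #(e.symm i).1 := by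
    congr 1
    ext x
    simp [← partOf_eq_iff, Equiv.eq_symm_apply]
  rw [mem_partLabellings]
  constructor
  · rintro ⟨hf, hcard⟩
    choose s hs using partOf_surjective P
    have hfs : ∀ x, f (s (partOf P x)) = f x := fun x =>
      (hf _ _).2 (congrArg Subtype.val (hs (partOf P x)))
    have hbij : Function.Bijective (f ∘ s) := by
      constructor
      · intro B C h
        rw [← hs B, ← hs C]
        exact Subtype.ext ((hf _ _).1 h)
      · intro i
        obtain ⟨x, hx⟩ := card_pos.1 (Nat.lt_of_lt_of_eq (hc i) (hcard i).symm)
        exact ⟨partOf P x, (hfs x).trans (mem_filter.1 hx).2⟩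
    obtain ⟨e, rfl⟩ : ∃ e : P.parts ≃ J, e ∘ partOf P = f :=
      ⟨Equiv.ofBijective _ hbij, funext hfs⟩
    refine ⟨e, funext fun B => ?_, rfl⟩
    rw [Function.comp_apply, ← hcard, hfiber, Equiv.symm_apply_apply]
  · rintro ⟨e, hce, rfl⟩
    refine ⟨fun x y => ?_, fun i => ?_⟩
    · simp [partOf]
    · rw [hfiber, ← congrFun hce, Function.comp_apply, Equiv.apply_symm_apply]

theorem partSizes_eq_map (P : Finpartition (univ : Finset (Fin n))) :
    partSizes P = Multiset.map (fun B : P.parts => #B.1) univ.val :=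
  (Multiset.attach_map_val' P.parts.val Finset.card).symm

theorem card_partLabellings {P : Finpartition (univ : Finset (Fin n))} {c : J → ℕ}
    (hc : ∀ i, 1 ≤ c i) (hP : partSizes P = Multiset.map c univ.val) :
    #(partLabellings P c) = fMult (Multiset.map c univ.val) := by
  rw [partSizes_eq_map] at hP
  rw [← card_equiv_comp_eq hP, Fintype.card_subtype]
  symm
  refine card_bij (fun e _ => e ∘ partOf P) ?_ ?_ ?_
  · exact fun e he => (mem_partLabellings_iff hc).2 ⟨e, (mem_filter.1 he).2, rfl⟩
  · exact fun e _ e' _ h =>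
      DFunLike.coe_injective ((partOf_surjective P).injective_comp_right h)
  · intro f hf
    obtain ⟨e, he, hef⟩ := (mem_partLabellings_iff hc).1 hf
    exact ⟨e, mem_filter.2 ⟨mem_univ _, he⟩, hef⟩

theorem partSizes_of_mem_partLabellings {P : Finpartition (univ : Finset (Fin n))} {c : J → ℕ}
    (hc : ∀ i, 1 ≤ c i) {f : Fin n → J} (hf : f ∈ partLabellings P c) :
    partSizes P = Multiset.map c univ.val := by
  obtain ⟨e, he, -⟩ := (mem_partLabellings_iff hc).1 hf
  have := congrArg (Multiset.map c) (Multiset.map_univ_val_equiv e)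
  rw [Multiset.map_map, he] at this
  exact (partSizes_eq_map P).trans this

theorem exists_mem_partLabellings (f : Fin n → J) {c : J → ℕ} (h : ∀ i, #{x | f x = i} = c i) :
    ∃ P, f ∈ partLabellings P c :=
  ⟨Finpartition.ofSetoid (Setoid.ker f), mem_partLabellings.2
    ⟨fun _ _ => (Finpartition.part_ofSetoid_eq_iff (Setoid.ker f)).symm, h⟩⟩

theorem eq_of_mem_partLabellings {P Q : Finpartition (univ : Finset (Fin n))} {c : J → ℕ}
    {f : Fin n → J} (hP : f ∈ partLabellings P c) (hQ : f ∈ partLabellings Q c) : P = Q :=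
  finpartition_ext_part fun x y =>
    ((mem_partLabellings.1 hP).1 x y).symm.trans ((mem_partLabellings.1 hQ).1 x y)

theorem card_labelledPairs_eq_mul {c : J → ℕ} {b : K → ℕ} (hc : ∀ i, 1 ≤ c i)
    (hb : ∀ m, 1 ≤ b m) :
    #(labelledPairs n c b) =
      Nat.card {P : Finpartition (univ : Finset (Fin n)) //
        IsNoncrossing P ∧ partSizes P = Multiset.map c univ.val ∧
          ∃ σ, IsKreweras P σ ∧ partSizes σ = Multiset.map b univ.val} *
      (fMult (Multiset.map b univ.val) * fMult (Multiset.map c univ.val)) := by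
  let T : Finset (Finpartition (univ : Finset (Fin n)) × Finpartition (univ : Finset (Fin n))) :=
    {t | IsComplementaryPair t.1.part t.2.part ∧ partSizes t.1 = Multiset.map c univ.val ∧
      partSizes t.2 = Multiset.map b univ.val}
  have hT : Nat.card {P : Finpartition (univ : Finset (Fin n)) //
        IsNoncrossing P ∧ partSizes P = Multiset.map c univ.val ∧
          ∃ σ, IsKreweras P σ ∧ partSizes σ = Multiset.map b univ.val} = #T := by
    rw [Nat.card_eq_fintype_card, Fintype.card_subtype]
    symm
    refine card_bij (fun t _ => t.1) ?_ ?_ ?_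
    · intro t ht
      simp only [T, mem_filter, mem_univ, true_and, isComplementaryPair_part_iff] at ht ⊢
      exact ⟨ht.1.1, ht.2.1, t.2, ht.1.2, ht.2.2⟩
    · rintro ⟨P, Q⟩ h ⟨P', Q'⟩ h' rfl
      simp only [T, mem_filter, mem_univ, true_and] at h h'
      rw [finpartition_ext_part fun x y => (h.1.eq_iff x y).trans (h'.1.eq_iff x y).symm]
    · intro P hP
      simp only [mem_filter, mem_univ, true_and] at hP
      obtain ⟨hN, hPc, Q, hPQ, hQb⟩ := hP
      exact ⟨(P, Q), by simp [T, isComplementaryPair_part_iff, *], rfl⟩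
  have hS : labelledPairs n c b =
      T.biUnion fun t => partLabellings t.1 c ×ˢ partLabellings t.2 b := by
    ext ⟨f, g⟩
    simp only [mem_biUnion, mem_product, mem_labelledPairs, T, mem_filter, mem_univ, true_and]
    constructor
    · rintro ⟨hfg, hf, hg⟩
      obtain ⟨P, hP⟩ := exists_mem_partLabellings f hf
      obtain ⟨Q, hQ⟩ := exists_mem_partLabellings g hg
      exact ⟨(P, Q), ⟨(isComplementaryPair_congr (mem_partLabellings.1 hP).1
        (mem_partLabellings.1 hQ).1).1 hfg, partSizes_of_mem_partLabellings hc hP,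
        partSizes_of_mem_partLabellings hb hQ⟩, hP, hQ⟩
    · rintro ⟨t, ht, hf, hg⟩
      rw [mem_partLabellings] at hf hg
      exact ⟨(isComplementaryPair_congr hf.1 hg.1).2 ht.1, hf.2, hg.2⟩
  rw [hT, hS, card_biUnion, sum_const_nat]
  · intro t ht
    simp only [T, mem_filter, mem_univ, true_and] at ht
    rw [card_product, card_partLabellings hc ht.2.1, card_partLabellings hb ht.2.2, mul_comm]
  · intro t _ t' _ hne
    refine disjoint_left.2 fun fg h h' => hne ?_
    rw [mem_product] at h h'
    exact Prod.ext (eq_of_mem_partLabellings h.1 h'.1) (eq_of_mem_partLabellings h.2 h'.2)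

theorem fMult_pos (m : Multiset ℕ) : 0 < fMult m :=
  prod_pos fun _ _ => Nat.factorial_pos _

theorem sum_eq_of_partSizes_eq {P : Finpartition (univ : Finset (Fin n))} {c : J → ℕ}
    (h : partSizes P = Multiset.map c univ.val) : ∑ i, c i = n := by
  have := P.sum_card_parts
  rw [Finset.card_univ, Fintype.card_fin] at this
  rw [← this]
  exact (congrArg Multiset.sum h).symm

end Labellings

/-- For a noncrossing partition `π₀` of `{1,…,n}` with class-size multiset
`{c₁ ≥ ⋯ ≥ c_j}` whose Kreweras complement has class-size multiset
`{b₁ ≥ ⋯ ≥ b_{n-j+1}}`, the number of noncrossing partitions of `{1,…,n}` with exactly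
these two data equals `n·(n-j)!·(j-1)! / (f(b₁,…,b_{n-j+1})·f(c₁,…,c_j))`. -/
theorem card_noncrossing_with_kreweras_type (n j : ℕ) (hn : 1 ≤ n)
    (hj : 1 ≤ j) (hjn : j ≤ n)
    (c : Fin j → ℕ) (b : Fin (n - j + 1) → ℕ)
    (hcpos : ∀ r, 1 ≤ c r) (hcmono : ∀ r s : Fin j, r ≤ s → c s ≤ c r)
    (hbpos : ∀ r, 1 ≤ b r)
    (hbmono : ∀ r s : Fin (n - j + 1), r ≤ s → b s ≤ b r)
    (π₀ σ₀ : Finpartition (Finset.univ : Finset (Fin n)))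
    (hπ₀ : IsNoncrossing π₀) (hk₀ : IsKreweras π₀ σ₀)
    (hc₀ : partSizes π₀ = Multiset.map c Finset.univ.val)
    (hb₀ : partSizes σ₀ = Multiset.map b Finset.univ.val) :
    (Nat.card {P : Finpartition (Finset.univ : Finset (Fin n)) //
        IsNoncrossing P ∧ partSizes P = Multiset.map c Finset.univ.val ∧
          ∃ σ, IsKreweras P σ ∧ partSizes σ = Multiset.map b Finset.univ.val} : ℚ) =
      ((n : ℚ) * ((n - j).factorial : ℚ) * ((j - 1).factorial : ℚ)) /
        ((fMult (Multiset.map b Finset.univ.val) : ℚ) *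
          (fMult (Multiset.map c Finset.univ.val) : ℚ)) := by
  have hcard := card_labelledPairs_eq_mul (n := n) hcpos hbpos
  have hcs : (Finset.univ.filter fun r => c r ≠ 0) = Finset.univ :=
    Finset.filter_true_of_mem fun r _ => Nat.one_le_iff_ne_zero.1 (hcpos r)
  have hbs : (Finset.univ.filter fun r => b r ≠ 0) = Finset.univ :=
    Finset.filter_true_of_mem fun r _ => Nat.one_le_iff_ne_zero.1 (hbpos r)
  obtain ⟨n, rfl⟩ := Nat.exists_eq_add_of_le' hn
  have hmain := card_labelledPairs n c b (sum_eq_of_partSizes_eq hc₀) (sum_eq_of_partSizes_eq hb₀)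
  simp only [hcs, hbs, Finset.card_univ, Fintype.card_fin, Nat.add_sub_cancel] at hmain
  rw [hmain (by omega)] at hcard
  have hf := mul_pos (fMult_pos (Multiset.map b Finset.univ.val))
    (fMult_pos (Multiset.map c Finset.univ.val))
  rw [← Nat.cast_mul (fMult _), eq_div_iff (by exact_mod_cast hf.ne')]
  exact_mod_cast hcard.symm.trans (by ring)
end
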